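/- The shifted cocycle identity holds in End((ℂ²)^{⊗3}): F^{(12)}(w) · F^{Δ,12}(w) = F^{(23)}(w q^{2H₁}) · F^{12,Δ}(w). (This is the image of the face-type shifted cocycle condition F^{(12)}(λ)·(Δ ⊗ id)F(λ) = F^{(23)}(λ + h^{(1)})·(id ⊗ Δ)F(λ) for the quantum group U_q(sl₂) under the tensor cube of its two-dimensional representation.) -/

import Mathlib

open Matrix
open scoped Kronecker

noncomputable section

/-- `e = E₁₂`. -/
def eM : Matrix (Fin 2) (Fin 2) ℂ := !![0, 1; 0, 0]

/-- `f = E₂₁`. -/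
def fM : Matrix (Fin 2) (Fin 2) ℂ := !![0, 0; 1, 0]

/-- `t = diag(q, q⁻¹)`. -/
def tM (q : ℂ) : Matrix (Fin 2) (Fin 2) ℂ := !![q, 0; 0, q⁻¹]

/-- `(n)_{q⁻²}! = ∏_{k=1}^n (1 - q^{-2k})/(1 - q^{-2})`. -/
def qfac (q : ℂ) (n : ℕ) : ℂ :=
  ∏ k ∈ Finset.Icc 1 n, ((1 - q⁻¹ ^ (2 * k)) / (1 - q⁻¹ ^ 2))

/-- The scalar coefficient `(q²u)^n (q - q⁻¹)^n / (n)_{q⁻²}!`. -/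
def coefF (q u : ℂ) (n : ℕ) : ℂ := (q ^ 2 * u) ^ n * (q - q⁻¹) ^ n / qfac q n

/-- The operator Pochhammer symbol `(q⁻²u X; q⁻²)_n = ∏_{k=0}^{n-1} (1 - u q^{-2k-2} X)`. -/
def pochOp {ι : Type*} [Fintype ι] [DecidableEq ι] (q u : ℂ) (X : Matrix ι ι ℂ)
    (n : ℕ) : Matrix ι ι ℂ :=
  (((List.range n).map fun k =>
    (1 : Matrix ι ι ℂ) - (u * q⁻¹ ^ (2 * k + 2)) • X)).prod

/-- The image `F(u)` of the `sl₂` face-type twistor on `ℂ² ⊗ ℂ²`. -/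
def F4 (q u : ℂ) : Matrix (Fin 2 × Fin 2) (Fin 2 × Fin 2) ℂ :=
  ∑' n : ℕ, coefF q u n •
    ((pochOp q u ((tM q * tM q) ⊗ₖ (1 : Matrix (Fin 2) (Fin 2) ℂ)) n)⁻¹ *
      (((eM * tM q) ^ n) ⊗ₖ ((tM q * fM) ^ n)))

/-- `Δ(et) = et ⊗ t + t² ⊗ et`. -/
def copEt (q : ℂ) : Matrix (Fin 2 × Fin 2) (Fin 2 × Fin 2) ℂ :=
  (eM * tM q) ⊗ₖ tM q + (tM q * tM q) ⊗ₖ (eM * tM q)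

/-- `Δ(tf) = tf ⊗ 1 + t ⊗ tf`. -/
def copTf (q : ℂ) : Matrix (Fin 2 × Fin 2) (Fin 2 × Fin 2) ℂ :=
  (tM q * fM) ⊗ₖ (1 : Matrix (Fin 2) (Fin 2) ℂ) + tM q ⊗ₖ (tM q * fM)

/-- `Δ(t²) = t² ⊗ t²`. -/
def copT2 (q : ℂ) : Matrix (Fin 2 × Fin 2) (Fin 2 × Fin 2) ℂ :=
  (tM q * tM q) ⊗ₖ (tM q * tM q)

/-- Reindexing `(ℂ² ⊗ ℂ²) ⊗ ℂ² ≅ ℂ² ⊗ (ℂ² ⊗ ℂ²)`. -/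
def reindexA (M : Matrix ((Fin 2 × Fin 2) × Fin 2) ((Fin 2 × Fin 2) × Fin 2) ℂ) :
    Matrix (Fin 2 × Fin 2 × Fin 2) (Fin 2 × Fin 2 × Fin 2) ℂ :=
  Matrix.reindex (Equiv.prodAssoc (Fin 2) (Fin 2) (Fin 2))
    (Equiv.prodAssoc (Fin 2) (Fin 2) (Fin 2)) M

/-- `F^{Δ,12}(u) = (Δ ⊗ id)(F)(u)` on `(ℂ²)^{⊗3}`. -/
def FcopLeft (q u : ℂ) : Matrix (Fin 2 × Fin 2 × Fin 2) (Fin 2 × Fin 2 × Fin 2) ℂ :=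
  ∑' n : ℕ, coefF q u n •
    ((pochOp q u (reindexA (copT2 q ⊗ₖ (1 : Matrix (Fin 2) (Fin 2) ℂ))) n)⁻¹ *
      reindexA ((copEt q ^ n) ⊗ₖ ((tM q * fM) ^ n)))

/-- `F^{12,Δ}(u) = (id ⊗ Δ)(F)(u)` on `(ℂ²)^{⊗3}`. -/
def FcopRight (q u : ℂ) : Matrix (Fin 2 × Fin 2 × Fin 2) (Fin 2 × Fin 2 × Fin 2) ℂ :=
  ∑' n : ℕ, coefF q u n •
    ((pochOp q u ((tM q * tM q) ⊗ₖ (1 : Matrix (Fin 2 × Fin 2) (Fin 2 × Fin 2) ℂ)) n)⁻¹ *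
      (((eM * tM q) ^ n) ⊗ₖ (copTf q ^ n)))

/-- `F^{(12)}(u) = F(u) ⊗ 1`. -/
def F12 (q u : ℂ) : Matrix (Fin 2 × Fin 2 × Fin 2) (Fin 2 × Fin 2 × Fin 2) ℂ :=
  reindexA (F4 q u ⊗ₖ (1 : Matrix (Fin 2) (Fin 2) ℂ))

/-- `F^{(23)}(u q^{2H₁})`, acting as `1 ⊗ F(u q^{2ε̂})` on `v_ε ⊗ x`. -/
def F23shift (q u : ℂ) : Matrix (Fin 2 × Fin 2 × Fin 2) (Fin 2 × Fin 2 × Fin 2) ℂ :=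
  Matrix.of fun a b =>
    if a.1 = b.1 then F4 q (u * q ^ (if a.1 = 0 then (2 : ℤ) else -2)) a.2 b.2 else 0

/-! Nilpotency of `et` and `tf` truncates every series after its linear term. With `c = q - q⁻¹` and
`φ(u) = u / (1 - u)` the two sides become `(1 + c φ(w) A) (1 + c (K + G))` and
`(1 + c G) (1 + c φ(w) (A + H))`, where `A = e ⊗ f ⊗ 1`, `H = e ⊗ t ⊗ f`, `G = φ(w t²) ⊗ e ⊗ f` and
`K = e ⊗ t⁻¹ φ(w t²) ⊗ f`. As `A K = G H = 0`, everything reduces to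
`K + c φ(w) A G = φ(w) H + c φ(w) G A`. All four terms have the form `e ⊗ D ⊗ f` with `D` diagonal,
and on the two weight vectors this is the scalar identity
`x⁻¹ φ(w x²) = φ(w) x + (x - x⁻¹) φ(w) φ(w x²)` at `x = q` and `x = q⁻¹`. -/

section Diagonal

variable {l m n p R : Type*} [DecidableEq m] [DecidableEq n]

theorem inv_one_sub_smul_diagonal {K : Type*} [Field K] [Fintype m] (c : K) (d : m → K)
    (h : ∀ i, c * d i ≠ 1) :
    ((1 : Matrix m m K) - c • diagonal d)⁻¹ = diagonal fun i => (1 - c * d i)⁻¹ := by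
  refine inv_eq_right_inv ?_
  rw [← diagonal_one, ← diagonal_smul, diagonal_sub, diagonal_mul_diagonal]
  exact congrArg diagonal (funext fun i => mul_inv_cancel₀ (sub_ne_zero.2 (h i).symm))

variable [Fintype m] [Fintype n] [CommSemiring R]

theorem diagonal_mul_single_kronecker [DecidableEq l] (d : m × n → R) (i : m) (j : l) (r : R)
    (B : Matrix n p R) :
    diagonal d * (single i j r ⊗ₖ B) = single i j r ⊗ₖ (diagonal (fun k => d (i, k)) * B) := by
  ext ⟨a, b⟩ ⟨a', b'⟩
  by_cases ha : i = a
  · subst ha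
    simp only [diagonal_mul, kroneckerMap_apply, mul_left_comm]
  · simp [diagonal_mul, ha]

theorem diagonal_mul_kronecker_single [DecidableEq l] (d : m × n → R) (A : Matrix m p R) (i : n)
    (j : l) (r : R) :
    diagonal d * (A ⊗ₖ single i j r) = (diagonal (fun k => d (k, i)) * A) ⊗ₖ single i j r := by
  ext ⟨a, b⟩ ⟨a', b'⟩
  by_cases hb : i = b
  · subst hb
    simp only [diagonal_mul, kroneckerMap_apply, mul_assoc]
  · simp [diagonal_mul, hb]

end Diagonal

theorem one_add_smul_mul_one_add_smul_eq {R S : Type*} [CommRing R] [Ring S] [Algebra R S]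
    {A G H K : S} {c r : R} (hAK : A * K = 0) (hGH : G * H = 0)
    (h : K + (c * r) • (A * G) = r • H + (c * r) • (G * A)) :
    (1 + (c * r) • A) * (1 + c • (K + G)) = (1 + c • G) * (1 + (c * r) • (A + H)) := by
  calc (1 + (c * r) • A) * (1 + c • (K + G))
      = 1 + (c * r) • A + c • G + c • (K + (c * r) • (A * G)) := by
        simp only [mul_add, add_mul, smul_mul_smul, one_mul, mul_one, hAK]
        module
    _ = 1 + (c * r) • A + c • G + c • (r • H + (c * r) • (G * A)) := by rw [h]
    _ = (1 + c • G) * (1 + (c * r) • (A + H)) := by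
        simp only [mul_add, add_mul, smul_mul_smul, one_mul, mul_one, hGH]
        module

section Series

variable {m n : Type*} [Fintype m] [DecidableEq m] [Fintype n] [DecidableEq n]

theorem coefF_one (u : ℂ) {q : ℂ} (hq2 : q ^ 2 ≠ 1) : coefF q u 1 = q ^ 2 * u * (q - q⁻¹) := by
  have h : 1 - (q ^ 2)⁻¹ ≠ 0 := sub_ne_zero.2 fun h => hq2 (inv_eq_one.1 h.symm)
  simp [coefF, qfac, div_self h]

theorem hasSum_coefF_smul_inv_pochOp_mul (u : ℂ) {q : ℂ} (hq2 : q ^ 2 ≠ 1) (X : Matrix m m ℂ)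
    {A : Matrix m m ℂ} {B : Matrix n n ℂ} (hAB : A ^ 2 = 0 ∨ B ^ 2 = 0) :
    HasSum (fun k => coefF q u k •
        ((pochOp q u (X ⊗ₖ (1 : Matrix n n ℂ)) k)⁻¹ * ((A ^ k) ⊗ₖ (B ^ k))))
      (1 + (q ^ 2 * u * (q - q⁻¹)) • (((1 - (u * q⁻¹ ^ 2) • X)⁻¹ * A) ⊗ₖ B)) := by
  have htail (k : ℕ) (hk : 2 ≤ k) : (A ^ k) ⊗ₖ (B ^ k) = 0 := by
    rcases hAB with hA | hB
    · rw [pow_eq_zero_of_le hk hA, zero_kronecker]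
    · rw [pow_eq_zero_of_le hk hB, kronecker_zero]
  have hpoch : pochOp q u (X ⊗ₖ (1 : Matrix n n ℂ)) 1 = (1 - (u * q⁻¹ ^ 2) • X) ⊗ₖ 1 := by
    simp only [pochOp, List.range_one, List.map_singleton, List.prod_singleton, mul_zero, zero_add]
    rw [sub_eq_iff_eq_add, ← smul_kronecker, ← add_kronecker, sub_add_cancel, one_kronecker_one]
  have hzero : coefF q u 0 •
      ((pochOp q u (X ⊗ₖ (1 : Matrix n n ℂ)) 0)⁻¹ * ((A ^ 0) ⊗ₖ (B ^ 0))) = 1 := by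
    simp [coefF, qfac, pochOp]
  have hone : (pochOp q u (X ⊗ₖ (1 : Matrix n n ℂ)) 1)⁻¹ * ((A ^ 1) ⊗ₖ (B ^ 1)) =
      ((1 - (u * q⁻¹ ^ 2) • X)⁻¹ * A) ⊗ₖ B := by
    rw [hpoch, inv_kronecker, inv_one, ← mul_kronecker_mul, one_mul, pow_one, pow_one]
  have hsum := hasSum_sum_of_ne_finset_zero (L := SummationFilter.unconditional ℕ)
    (f := fun k => coefF q u k •
      ((pochOp q u (X ⊗ₖ (1 : Matrix n n ℂ)) k)⁻¹ * ((A ^ k) ⊗ₖ (B ^ k))))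
    (s := Finset.range 2) fun k hk => by
      rw [htail k (not_lt.1 (Finset.mem_range.not.1 hk)), mul_zero, smul_zero]
  rwa [Finset.sum_range_succ, Finset.sum_range_one, hzero, hone, coefF_one u hq2] at hsum

theorem pochOp_reindex (q u : ℂ) (e : m ≃ n) (X : Matrix m m ℂ) (k : ℕ) :
    pochOp q u (reindex e e X) k = reindex e e (pochOp q u X k) := by
  simp only [pochOp, ← coe_reindexAlgEquiv ℂ ℂ, map_list_prod, List.map_map, Function.comp_def,
    map_sub, map_one, map_smul]

end Series

/-- The eigenvalue `h_i = ±1` of the Cartan generator on the basis vector `v_i` of `ℂ²`, so that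
`t v_i = q ^ h_i v_i`. -/
def weight (i : Fin 2) : ℤ := if i = 0 then 1 else -1

/-- The function `φ(u) = u / (1 - u)`, with junk value `0` at the pole `u = 1`; the twistor is
`F(u) = 1 + (q - q⁻¹) φ(u) E₁₂ ⊗ E₂₁`. -/
def faceCoeff (u : ℂ) : ℂ := u / (1 - u)

theorem eM_eq_single : eM = single 0 1 1 := by
  ext i j
  fin_cases i <;> fin_cases j <;> simp [eM]

theorem fM_eq_single : fM = single 1 0 1 := by
  ext i j
  fin_cases i <;> fin_cases j <;> simp [fM]

theorem diagonal_mul_eM (d : Fin 2 → ℂ) : diagonal d * eM = d 0 • eM := by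
  ext i j
  fin_cases i <;> fin_cases j <;> simp [eM]

theorem eM_mul_diagonal (d : Fin 2 → ℂ) : eM * diagonal d = d 1 • eM := by
  ext i j
  fin_cases i <;> fin_cases j <;> simp [eM]

theorem diagonal_mul_fM (d : Fin 2 → ℂ) : diagonal d * fM = d 1 • fM := by
  ext i j
  fin_cases i <;> fin_cases j <;> simp [fM]

theorem eM_mul_eM : eM * eM = 0 := by
  simp [eM_eq_single]

theorem fM_mul_fM : fM * fM = 0 := by
  simp [fM_eq_single]

theorem tM_eq_diagonal (q : ℂ) : tM q = diagonal fun i => q ^ weight i := by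
  ext i j
  fin_cases i <;> fin_cases j <;> simp [tM, weight]

theorem eM_mul_tM (q : ℂ) : eM * tM q = q⁻¹ • eM := by
  simp [tM_eq_diagonal, eM_mul_diagonal, weight]

theorem tM_mul_fM (q : ℂ) : tM q * fM = q⁻¹ • fM := by
  simp [tM_eq_diagonal, diagonal_mul_fM, weight]

theorem eM_mul_tM_sq (q : ℂ) : (eM * tM q) ^ 2 = 0 := by
  simp [eM_mul_tM, sq, eM_mul_eM]

theorem tM_mul_fM_sq (q : ℂ) : (tM q * fM) ^ 2 = 0 := by
  simp [tM_mul_fM, sq, fM_mul_fM]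

section Twistor

variable {q u : ℂ}

theorem mul_inv_sq_mul_zpow_mul_self (hq : q ≠ 0) (k : ℤ) :
    u * q⁻¹ ^ 2 * (q ^ k * q ^ k) = u * q ^ (2 * (k - 1)) := by
  rw [two_mul, zpow_add₀ hq, zpow_sub_one₀ hq]
  ring

theorem inv_one_sub_smul_tM_mul_tM (hq : q ≠ 0) (hu : ∀ i, u * q ^ (2 * (weight i - 1)) ≠ 1) :
    (1 - (u * q⁻¹ ^ 2) • (tM q * tM q))⁻¹ =
      diagonal fun i => (1 - u * q ^ (2 * (weight i - 1)))⁻¹ := by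
  rw [tM_eq_diagonal, diagonal_mul_diagonal, inv_one_sub_smul_diagonal]
  · simp only [mul_inv_sq_mul_zpow_mul_self hq]
  · simpa only [mul_inv_sq_mul_zpow_mul_self hq] using hu

theorem inv_one_sub_smul_copT2 (hq : q ≠ 0)
    (hu : ∀ i j, u * q ^ (2 * (weight i + weight j - 1)) ≠ 1) :
    (1 - (u * q⁻¹ ^ 2) • copT2 q)⁻¹ =
      diagonal fun a => (1 - u * q ^ (2 * (weight a.1 + weight a.2 - 1)))⁻¹ := by
  have hcop : copT2 q =
      diagonal fun a => q ^ (weight a.1 + weight a.2) * q ^ (weight a.1 + weight a.2) := by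
    simp only [copT2, tM_eq_diagonal, diagonal_mul_diagonal, diagonal_kronecker_diagonal,
      zpow_add₀ hq, mul_mul_mul_comm]
  rw [hcop, inv_one_sub_smul_diagonal]
  · simp only [mul_inv_sq_mul_zpow_mul_self hq]
  · simpa only [mul_inv_sq_mul_zpow_mul_self hq] using fun a : Fin 2 × Fin 2 => hu a.1 a.2

theorem inv_one_sub_smul_tM_mul_tM_mul_eM_mul_tM (hq : q ≠ 0)
    (hu : ∀ i, u * q ^ (2 * (weight i - 1)) ≠ 1) :
    (1 - (u * q⁻¹ ^ 2) • (tM q * tM q))⁻¹ * (eM * tM q) = (q⁻¹ * (1 - u)⁻¹) • eM := by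
  rw [inv_one_sub_smul_tM_mul_tM hq hu, eM_mul_tM, Matrix.mul_smul, diagonal_mul_eM, smul_smul]
  simp [weight]

theorem inv_one_sub_smul_copT2_mul_copEt (hq : q ≠ 0)
    (hu : ∀ i j, u * q ^ (2 * (weight i + weight j - 1)) ≠ 1) :
    (u * q) • ((1 - (u * q⁻¹ ^ 2) • copT2 q)⁻¹ * copEt q) =
      eM ⊗ₖ diagonal (fun j => q ^ (-weight j) * faceCoeff (u * q ^ (2 * weight j))) +
        diagonal (fun i => faceCoeff (u * q ^ (2 * weight i))) ⊗ₖ eM := by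
  have hcop : q • copEt q = eM ⊗ₖ tM q + (tM q * tM q) ⊗ₖ eM := by
    rw [copEt, eM_mul_tM, smul_kronecker, kronecker_smul, ← smul_add, smul_inv_smul₀ hq]
  rw [mul_smul, ← Matrix.mul_smul, hcop, inv_one_sub_smul_copT2 hq hu, tM_eq_diagonal,
    diagonal_mul_diagonal, eM_eq_single, mul_add, diagonal_mul_single_kronecker,
    diagonal_mul_kronecker_single, diagonal_mul_diagonal, diagonal_mul_diagonal, smul_add,
    ← kronecker_smul, ← smul_kronecker, ← diagonal_smul, ← diagonal_smul]
  congr 3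
  · ext j
    fin_cases j <;> simp [weight, faceCoeff] <;> field_simp
  · ext i
    fin_cases i <;> simp [weight, faceCoeff] <;> field_simp

theorem F4_eq (hq : q ≠ 0) (hq2 : q ^ 2 ≠ 1) (hu : ∀ i, u * q ^ (2 * (weight i - 1)) ≠ 1) :
    F4 q u = 1 + ((q - q⁻¹) * faceCoeff u) • (eM ⊗ₖ fM) := by
  rw [F4, (hasSum_coefF_smul_inv_pochOp_mul u hq2 (tM q * tM q) (.inl (eM_mul_tM_sq q))).tsum_eq,
    inv_one_sub_smul_tM_mul_tM_mul_eM_mul_tM hq hu, tM_mul_fM, smul_kronecker, kronecker_smul,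
    smul_smul, smul_smul]
  congr 2
  rw [faceCoeff]
  field_simp

theorem F12_eq (hq : q ≠ 0) (hq2 : q ^ 2 ≠ 1) (hu : ∀ i, u * q ^ (2 * (weight i - 1)) ≠ 1) :
    F12 q u = 1 + ((q - q⁻¹) * faceCoeff u) • (eM ⊗ₖ (fM ⊗ₖ (1 : Matrix (Fin 2) (Fin 2) ℂ))) := by
  rw [F12, F4_eq hq hq2 hu, add_kronecker, one_kronecker_one, smul_kronecker, reindexA,
    ← coe_reindexAlgEquiv ℂ ℂ, map_add, map_one, map_smul, coe_reindexAlgEquiv, kronecker_assoc]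

theorem F23shift_eq (hq : q ≠ 0) (hq2 : q ^ 2 ≠ 1)
    (hu : ∀ i j, u * q ^ (2 * (weight i + weight j - 1)) ≠ 1) :
    F23shift q u = 1 + (q - q⁻¹) •
      (diagonal (fun i => faceCoeff (u * q ^ (2 * weight i))) ⊗ₖ (eM ⊗ₖ fM)) := by
  have hF4 (i : Fin 2) := F4_eq (u := u * q ^ (2 * weight i)) hq hq2 fun j => by
    rw [mul_assoc, ← zpow_add₀ hq, ← mul_add, ← add_sub_assoc]
    exact hu i j
  have hshift (i : Fin 2) : (if i = 0 then (2 : ℤ) else -2) = 2 * weight i := by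
    fin_cases i <;> rfl
  ext ⟨i, x⟩ ⟨j, y⟩
  simp only [F23shift, of_apply, hshift, hF4]
  by_cases hij : i = j
  · subst hij
    simp [one_apply, mul_assoc]
  · simp [hij]

theorem FcopLeft_eq_reindexA (hq2 : q ^ 2 ≠ 1) :
    FcopLeft q u = reindexA (1 + (q ^ 2 * u * (q - q⁻¹)) •
      (((1 - (u * q⁻¹ ^ 2) • copT2 q)⁻¹ * copEt q) ⊗ₖ (tM q * fM))) := by
  have hinv (k : ℕ) (X : Matrix ((Fin 2 × Fin 2) × Fin 2) ((Fin 2 × Fin 2) × Fin 2) ℂ) :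
      (pochOp q u (reindexA X) k)⁻¹ = reindexA (pochOp q u X k)⁻¹ := by
    rw [reindexA, pochOp_reindex, inv_reindex, reindexA]
  have hsum := (hasSum_coefF_smul_inv_pochOp_mul u hq2 (copT2 q) (A := copEt q)
    (.inr (tM_mul_fM_sq q))).map
      (reindexAlgEquiv ℂ ℂ (Equiv.prodAssoc (Fin 2) (Fin 2) (Fin 2)))
      (continuous_id.matrix_reindex _ _)
  simp only [Function.comp_def, map_smul, map_mul] at hsum
  simp only [FcopLeft, hinv]
  exact hsum.tsum_eq

theorem FcopLeft_eq (hq : q ≠ 0) (hq2 : q ^ 2 ≠ 1)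
    (hu : ∀ i j, u * q ^ (2 * (weight i + weight j - 1)) ≠ 1) :
    FcopLeft q u = 1 + (q - q⁻¹) •
      (eM ⊗ₖ (diagonal (fun j => q ^ (-weight j) * faceCoeff (u * q ^ (2 * weight j))) ⊗ₖ fM) +
        diagonal (fun i => faceCoeff (u * q ^ (2 * weight i))) ⊗ₖ (eM ⊗ₖ fM)) := by
  have hscalar : q ^ 2 * u * (q - q⁻¹) * q⁻¹ = (q - q⁻¹) * (u * q) := by field_simp
  rw [FcopLeft_eq_reindexA hq2, tM_mul_fM, kronecker_smul, smul_smul, hscalar, mul_smul,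
    ← smul_kronecker, inv_one_sub_smul_copT2_mul_copEt hq hu, add_kronecker, reindexA,
    ← coe_reindexAlgEquiv ℂ ℂ, map_add, map_one, map_smul, map_add, coe_reindexAlgEquiv,
    kronecker_assoc, kronecker_assoc]

theorem FcopRight_eq (hq : q ≠ 0) (hq2 : q ^ 2 ≠ 1) (hu : ∀ i, u * q ^ (2 * (weight i - 1)) ≠ 1) :
    FcopRight q u = 1 + ((q - q⁻¹) * faceCoeff u) •
      (eM ⊗ₖ (fM ⊗ₖ (1 : Matrix (Fin 2) (Fin 2) ℂ)) + eM ⊗ₖ (tM q ⊗ₖ fM)) := by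
  rw [FcopRight,
    (hasSum_coefF_smul_inv_pochOp_mul u hq2 (tM q * tM q) (.inl (eM_mul_tM_sq q))).tsum_eq,
    inv_one_sub_smul_tM_mul_tM_mul_eM_mul_tM hq hu, copTf, tM_mul_fM, smul_kronecker,
    smul_kronecker, kronecker_smul, ← smul_add, kronecker_smul, smul_smul, smul_smul,
    kronecker_add]
  congr 2
  rw [faceCoeff]
  field_simp

end Twistor

theorem faceCoeff_exchange {x w : ℂ} (hx : x ≠ 0) (hw : w ≠ 1) (hwx : w * x ^ 2 ≠ 1) :
    x⁻¹ * faceCoeff (w * x ^ 2) =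
      faceCoeff w * x + (x - x⁻¹) * faceCoeff w * faceCoeff (w * x ^ 2) := by
  have h1 := sub_ne_zero.2 hw.symm
  have h2 : 1 - x ^ 2 * w ≠ 0 := sub_ne_zero.2 (mul_comm w _ ▸ hwx.symm)
  simp only [faceCoeff]
  field_simp
  ring

theorem diagonal_faceCoeff_exchange {q w : ℂ} (hq : q ≠ 0) (hw : w ≠ 1)
    (hwq : ∀ i, w * q ^ (2 * weight i) ≠ 1) :
    diagonal (fun j => q ^ (-weight j) * faceCoeff (w * q ^ (2 * weight j))) +
        ((q - q⁻¹) * faceCoeff w * faceCoeff (w * q ^ (2 * weight 1))) • (fM * eM) =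
      faceCoeff w • tM q +
        ((q - q⁻¹) * faceCoeff w * faceCoeff (w * q ^ (2 * weight 0))) • (eM * fM) := by
  have h0 := faceCoeff_exchange hq hw (by simpa [weight] using hwq 0)
  have h1 : q * faceCoeff (w * (q ^ 2)⁻¹) +
      (q - q⁻¹) * faceCoeff w * faceCoeff (w * (q ^ 2)⁻¹) = faceCoeff w * q⁻¹ := by
    have h := faceCoeff_exchange (inv_ne_zero hq) hw (by simpa [weight] using hwq 1)
    rw [inv_inv, inv_pow] at h
    linear_combination h
  ext i j
  fin_cases i <;> fin_cases j
  · simpa [weight, eM, fM, tM] using h0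
  · simp [eM, fM, tM]
  · simp [eM, fM, tM]
  · simpa [weight, eM, fM, tM] using h1

theorem face_twistor_shifted_cocycle_sl2_general (q w : ℂ) (hq : q ≠ 0) (hq2 : q ^ 2 ≠ 1)
    (hw : ∀ m ∈ Finset.Icc (-1 : ℤ) 3, w ≠ q ^ (2 * m)) :
    F12 q w * FcopLeft q w = F23shift q w * FcopRight q w := by
  have hpole (m : ℤ) (hm : m ∈ Finset.Icc (-3 : ℤ) 1) : w * q ^ (2 * m) ≠ 1 := fun h =>
    hw (-m) (by simp only [Finset.mem_Icc] at hm ⊢; lia)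
      (by rw [mul_neg, _root_.zpow_neg]; exact eq_inv_of_mul_eq_one_left h)
  -- The linear terms of the series have their poles at `w = q ^ (2 * m)`, where `m = 0, 2` come
  -- from `1 - w q⁻² t²` and `m = -1, 1, 3` from `1 - w q⁻² Δ(t²)`.
  have hF4 (i : Fin 2) : w * q ^ (2 * (weight i - 1)) ≠ 1 :=
    hpole _ (by fin_cases i <;> decide)
  have hcop (i j : Fin 2) : w * q ^ (2 * (weight i + weight j - 1)) ≠ 1 :=
    hpole _ (by fin_cases i <;> fin_cases j <;> decide)
  have hw1 : w ≠ 1 := by simpa using hpole 0 (by decide)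
  have hwq (i : Fin 2) : w * q ^ (2 * weight i) ≠ 1 := hpole _ (by fin_cases i <;> decide)
  rw [F12_eq hq hq2 hF4, FcopLeft_eq hq hq2 hcop, F23shift_eq hq hq2 hcop, FcopRight_eq hq hq2 hF4]
  refine one_add_smul_mul_one_add_smul_eq ?_ ?_ ?_
  · rw [← mul_kronecker_mul, eM_mul_eM, zero_kronecker]
  · rw [← mul_kronecker_mul, ← mul_kronecker_mul, fM_mul_fM, kronecker_zero, kronecker_zero]
  · have h := congrArg (fun D => eM ⊗ₖ (D ⊗ₖ fM)) (diagonal_faceCoeff_exchange hq hw1 hwq)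
    simpa only [← mul_kronecker_mul, eM_mul_diagonal, diagonal_mul_eM, one_mul, mul_one,
      kronecker_add, add_kronecker, kronecker_smul, smul_kronecker, smul_smul] using h

/-- The shifted cocycle identity
`F^{(12)}(w) F^{Δ,12}(w) = F^{(23)}(w q^{2H₁}) F^{12,Δ}(w)` holds in `End((ℂ²)^{⊗3})`. -/
theorem face_twistor_shifted_cocycle_sl2 (q w : ℂ) (hq : q ≠ 0)
    (hqroot : ∀ n : ℕ, n ≠ 0 → q ^ n ≠ 1)
    (hw : ∀ m : ℤ, w ≠ q ^ (2 * m)) :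
    F12 q w * FcopLeft q w = F23shift q w * FcopRight q w :=
  face_twistor_shifted_cocycle_sl2_general q w hq (hqroot 2 two_ne_zero) fun m _ => hw m

end
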